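/- Let n ≥ 1 and let u : ℝ^{n+1} × [0,∞) → ℝ be a smooth graphical solution to mean curvature flow ∂u/∂t = √(1+|Du|²) · div( Du/√(1+|Du|²) ). Let M ≥ 1 be such that |Du(x,t)| ≤ M at all points where u(x,t) ≤ 0. Fix x₀ ∈ ℝ^{n+1}, t₁ ≥ 0 with u(x₀,t₁) ≤ −1, and 0 < r ≤ 1/M. Then u(x₀,t₁) − (M+1)·r ≤ u(x₀, t₁ + r²/(2(n+1))) ≤ u(x₀,t₁) + (M+1)·r. -/

import Mathlib

open Set Filter Topology Metric

noncomputable section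

/-- Divergence of a vector field on Euclidean space. -/
def vecDiv {m : ℕ} (X : EuclideanSpace ℝ (Fin m) → EuclideanSpace ℝ (Fin m))
    (x : EuclideanSpace ℝ (Fin m)) : ℝ :=
  ∑ i, fderiv ℝ X x (EuclideanSpace.single i 1) i

/-- Spatial gradient of a time-dependent function. -/
def spatialGrad {m : ℕ} (u : EuclideanSpace ℝ (Fin m) × ℝ → ℝ)
    (x : EuclideanSpace ℝ (Fin m)) (t : ℝ) : EuclideanSpace ℝ (Fin m) :=
  gradient (fun y => u (y, t)) x

/-- The gradient function `v = √(1+|Du|²)` of the graph of `u(·,t)`. -/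
def gradFn {m : ℕ} (u : EuclideanSpace ℝ (Fin m) × ℝ → ℝ)
    (x : EuclideanSpace ℝ (Fin m)) (t : ℝ) : ℝ :=
  Real.sqrt (1 + ‖spatialGrad u x t‖ ^ 2)

/-- Graphical mean curvature flow equation
`∂u/∂t = √(1+|Du|²) · div(Du/√(1+|Du|²))` at the point `(x,t)`. -/
def mcfEqAt {m : ℕ} (u : EuclideanSpace ℝ (Fin m) × ℝ → ℝ)
    (x : EuclideanSpace ℝ (Fin m)) (t : ℝ) : Prop :=
  deriv (fun s => u (x, s)) t
    = gradFn u x t * vecDiv (fun y => (gradFn u y t)⁻¹ • spatialGrad u y t) x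

open scoped Gradient RealInnerProductSpace ContDiff

variable {m : ℕ}

local notation "𝔼" m => EuclideanSpace ℝ (Fin m)

lemma sum_coord_smul_single (p : 𝔼 m) :
    ∑ i, p i • (EuclideanSpace.single i 1 : 𝔼 m) = p := by
  simpa using (EuclideanSpace.basisFun (Fin m) ℝ).sum_repr p

/-- A form that is nonnegative on the diagonal has nonnegative trace against
`1 - p ⊗ p / (1 + ‖p‖²)`. -/
lemma apply_self_div_le_trace (B : (𝔼 m) →ₗ[ℝ] (𝔼 m) →ₗ[ℝ] ℝ) (hB : ∀ w, 0 ≤ B w w) (p : 𝔼 m) :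
    B p p / (1 + ‖p‖ ^ 2)
      ≤ ∑ i, B (EuclideanSpace.single i 1) (EuclideanSpace.single i 1) := by
  set e : Fin m → 𝔼 m := fun i => EuclideanSpace.single i 1
  set s : ℝ := (1 + ‖p‖ ^ 2)⁻¹ with hs
  have hp : ∑ i, p i • e i = p := sum_coord_smul_single p
  have h1 : ∑ i, p i * B (e i) p = B p p := by
    have h := congrArg (fun z => B z p) hp
    simpa using h
  have h2 : ∑ i, p i * B p (e i) = B p p := by
    have h := congrArg (B p) hp
    simpa using h
  have h3 : ∑ i, p i ^ 2 = ‖p‖ ^ 2 := (EuclideanSpace.real_norm_sq_eq p).symm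
  have key : 0 ≤ ∑ i, B (e i - (s * p i) • p) (e i - (s * p i) • p) :=
    Finset.sum_nonneg fun i _ => hB _
  have expand : ∑ i, B (e i - (s * p i) • p) (e i - (s * p i) • p)
      = ∑ i, B (e i) (e i) - 2 * s * B p p + s ^ 2 * ‖p‖ ^ 2 * B p p := by
    have : ∀ i, B (e i - (s * p i) • p) (e i - (s * p i) • p)
        = B (e i) (e i) - s * (p i * B (e i) p) - s * (p i * B p (e i))
          + s ^ 2 * B p p * p i ^ 2 := by
      intro i
      simp
      ring
    simp_rw [this]
    rw [Finset.sum_add_distrib, Finset.sum_sub_distrib, Finset.sum_sub_distrib,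
      ← Finset.mul_sum, ← Finset.mul_sum, ← Finset.mul_sum, h1, h2, h3]
    ring
  rw [expand] at key
  have hpos : 0 < 1 + ‖p‖ ^ 2 := by positivity
  have hs0 : 0 < s := inv_pos.2 hpos
  have hs1 : s * (1 + ‖p‖ ^ 2) = 1 := inv_mul_cancel₀ hpos.ne'
  have hBp := hB p
  have : 2 * s * B p p - s ^ 2 * ‖p‖ ^ 2 * B p p = s * B p p + s ^ 2 * B p p := by
    linear_combination (-s * B p p) * hs1
  rw [div_eq_mul_inv, ← hs]
  nlinarith [mul_nonneg (sq_nonneg s) hBp]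

/-- The Riesz isomorphism as a real-linear map. -/
def dualToVec : StrongDual ℝ (𝔼 m) →L[ℝ] (𝔼 m) :=
  { toFun := (InnerProductSpace.toDual ℝ (𝔼 m)).symm
    map_add' := map_add _
    map_smul' := fun c f => by simp
    cont := (InnerProductSpace.toDual ℝ (𝔼 m)).symm.continuous }

lemma dualToVec_apply (f : StrongDual ℝ (𝔼 m)) :
    dualToVec f = (InnerProductSpace.toDual ℝ (𝔼 m)).symm f := rfl

lemma hasFDerivAt_gradient {φ : (𝔼 m) → ℝ} (hφ : ContDiff ℝ 2 φ) (x : 𝔼 m) :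
    HasFDerivAt (∇ φ)
      (dualToVec.comp (fderiv ℝ (fderiv ℝ φ) x)) x := by
  have h : DifferentiableAt ℝ (fderiv ℝ φ) x :=
    ((hφ.fderiv_right (m := 1) (by norm_num)).differentiable (by norm_num)) x
  exact (dualToVec (m := m)).hasFDerivAt.comp x h.hasFDerivAt

/-- The graphical mean curvature operator in nondivergence form. -/
lemma sqrt_mul_vecDiv_eq {φ : (𝔼 m) → ℝ} (hφ : ContDiff ℝ 2 φ) (x : 𝔼 m) :
    √(1 + ‖∇ φ x‖ ^ 2) * vecDiv (fun y => (√(1 + ‖∇ φ y‖ ^ 2))⁻¹ • ∇ φ y) x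
      = ∑ i, fderiv ℝ (fderiv ℝ φ) x (EuclideanSpace.single i 1) (EuclideanSpace.single i 1)
        - fderiv ℝ (fderiv ℝ φ) x (∇ φ x) (∇ φ x) / (1 + ‖∇ φ x‖ ^ 2) := by
  set H := fderiv ℝ (fderiv ℝ φ) x
  set p := ∇ φ x with hp
  set G : (𝔼 m) →L[ℝ] (𝔼 m) := dualToVec.comp H with hG
  have hGr : HasFDerivAt (∇ φ) G x := hasFDerivAt_gradient hφ x
  have hin : ∀ w z, ⟪z, G w⟫ = H w z := fun w z => by
    rw [real_inner_comm]
    simp [hG, dualToVec_apply]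
  have hpos : 0 < 1 + ‖p‖ ^ 2 := by positivity
  set v := √(1 + ‖p‖ ^ 2) with hv
  have hv0 : 0 < v := Real.sqrt_pos.2 hpos
  have hv2 : v ^ 2 = 1 + ‖p‖ ^ 2 := Real.sq_sqrt hpos.le
  have hsq := (hGr.norm_sq.const_add 1).sqrt hpos.ne'
  have hinv := (hasDerivAt_inv hv0.ne').comp_hasFDerivAt x hsq
  have hX := (hinv.smul hGr).fderiv
  have hdiv : vecDiv (fun y => (√(1 + ‖∇ φ y‖ ^ 2))⁻¹ • ∇ φ y) x
      = ∑ i, (v⁻¹ * H (EuclideanSpace.single i 1) (EuclideanSpace.single i 1)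
        - v⁻¹ ^ 3 * (p i * H (EuclideanSpace.single i 1) p)) := by
    unfold vecDiv
    refine Finset.sum_congr rfl fun i _ => ?_
    have hGi : G (EuclideanSpace.single i 1) i
        = H (EuclideanSpace.single i 1) (EuclideanSpace.single i 1) := by
      rw [← hin]
      simp [EuclideanSpace.inner_single_left]
    have hGp := hin (EuclideanSpace.single i 1) p
    erw [hX]
    simp [hGi, hGp, ← hp, ← hv]
    field_simp
    ring
  have hsum : ∑ i, p i * H (EuclideanSpace.single i 1) p = H p p := by
    have h := congrArg (fun z => H z p) (sum_coord_smul_single p)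
    simpa using h
  rw [hdiv, Finset.sum_sub_distrib, ← Finset.mul_sum, ← Finset.mul_sum, hsum, ← hv2]
  field_simp

lemma IsLocalMin.deriv_deriv_nonneg {f : ℝ → ℝ} {a : ℝ} (h : IsLocalMin f a)
    (hc : ContinuousAt f a) : 0 ≤ deriv (deriv f) a := by
  by_contra! hneg
  have hmax := isLocalMax_of_deriv_deriv_neg hneg h.deriv_eq_zero hc
  have hconst : f =ᶠ[𝓝 a] fun _ => f a := by
    filter_upwards [h, hmax] with y h1 h2 using le_antisymm h2 h1
  have := hconst.deriv.deriv_eq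
  simp at this
  linarith

lemma HasDerivAt.nonpos_of_le_left {f : ℝ → ℝ} {f' a b : ℝ} (hab : a < b)
    (hf : HasDerivAt f f' b) (h : ∀ s ∈ Ico a b, f b ≤ f s) : f' ≤ 0 := by
  refine le_of_tendsto
    ((hasDerivWithinAt_iff_tendsto_slope' self_notMem_Iio).1 (hf.hasDerivWithinAt (s := Iio b))) ?_
  filter_upwards [Ico_mem_nhdsLT hab] with s hs
  rw [slope_def_field]
  exact div_nonpos_of_nonneg_of_nonpos (sub_nonneg.2 (h s hs)) (sub_nonpos.2 hs.2.le)

/-- Second order condition at a spatial minimum of the squared distance from a point to a graph. -/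
lemma hessian_sqDist_graph_nonneg {φ : (𝔼 m) → ℝ} (hφ : ContDiff ℝ 2 φ) (c : ℝ) (x₀ x : 𝔼 m)
    (hmin : IsLocalMin (fun y => ‖y - x₀‖ ^ 2 + (φ y - c) ^ 2) x) (w : 𝔼 m) :
    0 ≤ ‖w‖ ^ 2 + (fderiv ℝ φ x w) ^ 2 + (φ x - c) * fderiv ℝ (fderiv ℝ φ) x w w := by
  set k : ℝ → ℝ := fun τ => ‖x + τ • w - x₀‖ ^ 2 + (φ (x + τ • w) - c) ^ 2 with hk
  have hline : ∀ τ : ℝ, HasDerivAt (fun τ : ℝ => x + τ • w) w τ := fun τ => by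
    simpa using ((hasDerivAt_id τ).smul_const w).const_add x
  have hφ1 : ∀ τ, HasDerivAt (fun τ : ℝ => φ (x + τ • w)) (fderiv ℝ φ (x + τ • w) w) τ := fun τ =>
    HasFDerivAt.comp_hasDerivAt (l := φ) τ
      ((hφ.differentiable (by norm_num)) (x + τ • w)).hasFDerivAt (hline τ)
  have hφ2 : HasDerivAt (fun τ : ℝ => fderiv ℝ φ (x + τ • w) w)
      (fderiv ℝ (fderiv ℝ φ) x w w) 0 := by
    have h : DifferentiableAt ℝ (fderiv ℝ φ) (x + (0 : ℝ) • w) :=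
      ((hφ.fderiv_right (m := 1) (by norm_num)).differentiable (by norm_num)) _
    have h1 : HasDerivAt (fun τ : ℝ => fderiv ℝ φ (x + τ • w))
        (fderiv ℝ (fderiv ℝ φ) (x + (0 : ℝ) • w) w) 0 :=
      HasFDerivAt.comp_hasDerivAt (l := fderiv ℝ φ) (0 : ℝ) h.hasFDerivAt (hline 0)
    simpa using h1.clm_apply (hasDerivAt_const (0 : ℝ) w)
  have hk1 : ∀ τ, HasDerivAt k
      (2 * ⟪x + τ • w - x₀, w⟫ + 2 * ((φ (x + τ • w) - c) * fderiv ℝ φ (x + τ • w) w)) τ := by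
    intro τ
    refine (((hline τ).sub_const x₀).norm_sq.add (((hφ1 τ).sub_const c).pow 2)).congr_deriv ?_
    simp
    ring
  have hk2 : HasDerivAt (deriv k) (2 * ‖w‖ ^ 2 + 2 * ((fderiv ℝ φ x w) ^ 2
      + (φ x - c) * fderiv ℝ (fderiv ℝ φ) x w w)) 0 := by
    rw [show deriv k = _ from funext fun τ => (hk1 τ).deriv]
    have h1 := (((hline 0).sub_const x₀).inner ℝ (hasDerivAt_const (0 : ℝ) w)).const_mul 2
    have h2 := ((((hφ1 0).sub_const c).mul hφ2)).const_mul 2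
    refine (h1.add h2).congr_deriv ?_
    simp
    ring
  have hkmin : IsLocalMin k 0 := by
    have hc : Tendsto (fun τ : ℝ => x + τ • w) (𝓝 0) (𝓝 x) := by
      simpa using (hline 0).continuousAt.tendsto
    filter_upwards [hc.eventually hmin] with τ hτ
    simpa [hk] using hτ
  have := hkmin.deriv_deriv_nonneg (hk1 0).continuousAt
  rw [hk2.deriv] at this
  linarith

lemma contDiff_slice {u : (𝔼 m) × ℝ → ℝ}
    (hu : ContDiffOn ℝ (⊤ : ℕ∞) u {p : (𝔼 m) × ℝ | 0 ≤ p.2}) {t : ℝ} (ht : 0 ≤ t) :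
    ContDiff ℝ 2 (fun y => u (y, t)) :=
  (hu.of_le (by norm_cast)).comp_contDiff (by fun_prop) fun _ => ht

lemma mcfEqAt_iff {u : (𝔼 m) × ℝ → ℝ} {t : ℝ} (hφ : ContDiff ℝ 2 (fun y => u (y, t))) (x : 𝔼 m) :
    mcfEqAt u x t ↔ deriv (fun s => u (x, s)) t
      = ∑ i, fderiv ℝ (fderiv ℝ fun y => u (y, t)) x
          (EuclideanSpace.single i 1) (EuclideanSpace.single i 1)
        - fderiv ℝ (fderiv ℝ fun y => u (y, t)) x (spatialGrad u x t) (spatialGrad u x t)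
          / (1 + ‖spatialGrad u x t‖ ^ 2) := by
  have h : gradFn u x t * vecDiv (fun y => (gradFn u y t)⁻¹ • spatialGrad u y t) x = _ :=
    sqrt_mul_vecDiv_eq hφ x
  rw [mcfEqAt, h]
  rfl

/-- At a spatial minimum of the squared distance from `(x₀, c)` to the graph, that squared distance
decreases at rate at most `2m`. -/
lemma mcfEqAt.add_mul_deriv_nonneg {u : (𝔼 m) × ℝ → ℝ} {t : ℝ}
    (hφ : ContDiff ℝ 2 (fun y => u (y, t))) {x : 𝔼 m} (heq : mcfEqAt u x t) (c : ℝ) (x₀ : 𝔼 m)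
    (hmin : IsLocalMin (fun y => ‖y - x₀‖ ^ 2 + (u (y, t) - c) ^ 2) x) :
    0 ≤ m + (u (x, t) - c) * deriv (fun s => u (x, s)) t := by
  rw [mcfEqAt_iff hφ] at heq
  rw [heq]
  have hH := hessian_sqDist_graph_nonneg hφ c x₀ x hmin
  set H := fderiv ℝ (fderiv ℝ fun y => u (y, t)) x
  set p := spatialGrad u x t with hp
  have hpw : ∀ w, fderiv ℝ (fun y => u (y, t)) x w = ⟪p, w⟫ := fun w =>
    (inner_gradient_left (𝕜 := ℝ)).symm
  set B : (𝔼 m) →ₗ[ℝ] (𝔼 m) →ₗ[ℝ] ℝ :=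
    innerₗ (𝔼 m) + (innerₗ (𝔼 m) p).smulRight (innerₗ (𝔼 m) p)
      + (u (x, t) - c) • H.toLinearMap₁₂ with hBdef
  have hB : ∀ w z, B w z = ⟪w, z⟫ + ⟪p, w⟫ * ⟪p, z⟫ + (u (x, t) - c) * H w z := fun w z => by
    simp [hBdef]
  have key := apply_self_div_le_trace B (fun w => by
    have := hH w
    rw [hpw] at this
    rw [hB, real_inner_self_eq_norm_sq]
    linarith) p
  have h3 : ∑ i, p i * p i = ‖p‖ ^ 2 := by
    rw [EuclideanSpace.real_norm_sq_eq]
    exact Finset.sum_congr rfl fun i _ => (sq _).symm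
  simp_rw [hB] at key
  rw [Finset.sum_add_distrib, Finset.sum_add_distrib, ← Finset.mul_sum] at key
  simp only [EuclideanSpace.inner_single_right] at key
  simp [h3] at key
  have hpos : (0 : ℝ) < 1 + ‖p‖ ^ 2 := by positivity
  have e : (‖p‖ ^ 2 + ‖p‖ ^ 2 * ‖p‖ ^ 2 + (u (x, t) - c) * H p p) / (1 + ‖p‖ ^ 2)
      = ‖p‖ ^ 2 + (u (x, t) - c) * (H p p / (1 + ‖p‖ ^ 2)) := by
    field_simp
  rw [e] at key
  linarith

/-- Points of `ℝ^{m+1}` at distance at least `r` from the graph at time `t₁` stay at distance at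
least `√(r² - 2m(t - t₁))` from the graph at later times. -/
lemma sq_le_sqDist_graph {u : (𝔼 m) × ℝ → ℝ}
    (hu : ContDiffOn ℝ (⊤ : ℕ∞) u {p : (𝔼 m) × ℝ | 0 ≤ p.2})
    (heq : ∀ (x : 𝔼 m) (t : ℝ), 0 < t → mcfEqAt u x t)
    {t₁ : ℝ} (ht₁ : 0 ≤ t₁) {r : ℝ} (hr : 0 < r) (c : ℝ) (x₀ : 𝔼 m)
    (hinit : ∀ x ∈ ball x₀ r, r ≤ |u (x, t₁) - c|) (x : 𝔼 m) {t : ℝ} (ht : t₁ ≤ t) :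
    r ^ 2 ≤ ‖x - x₀‖ ^ 2 + (u (x, t) - c) ^ 2 + 2 * m * (t - t₁) := by
  by_contra! hlt
  set f : (𝔼 m) × ℝ → ℝ :=
    fun q => ‖q.1 - x₀‖ ^ 2 + (u q - c) ^ 2 + 2 * m * (q.2 - t₁) with hf
  obtain ⟨ε, hε, hεlt⟩ : ∃ ε > 0, f (x, t) + ε * (t - t₁) < r ^ 2 := by
    have hd : 0 < r ^ 2 - f (x, t) := sub_pos.2 hlt
    refine ⟨(r ^ 2 - f (x, t)) / (2 * (t - t₁ + 1)), div_pos hd (by linarith), ?_⟩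
    have h1 : (r ^ 2 - f (x, t)) / (2 * (t - t₁ + 1)) * (t - t₁) < r ^ 2 - f (x, t) := by
      rw [div_mul_eq_mul_div, div_lt_iff₀ (by linarith)]
      nlinarith
    linarith
  set g : (𝔼 m) × ℝ → ℝ := fun q => f q + ε * (q.2 - t₁) with hg
  have hnonneg : ∀ q : (𝔼 m) × ℝ, t₁ ≤ q.2 → ‖q.1 - x₀‖ ^ 2 ≤ g q := fun q hq => by
    have h1 : 0 ≤ 2 * (m : ℝ) * (q.2 - t₁) := mul_nonneg (by positivity) (by linarith)
    have h2 : 0 ≤ ε * (q.2 - t₁) := mul_nonneg hε.le (by linarith)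
    simp only [hg, hf]
    nlinarith [sq_nonneg (u q - c)]
  have hmem : ∀ q : (𝔼 m) × ℝ, t₁ ≤ q.2 → g q < r ^ 2 → q.1 ∈ ball x₀ r := fun q hq hqr => by
    rw [mem_ball, dist_eq_norm]
    exact lt_of_pow_lt_pow_left₀ 2 hr.le ((hnonneg q hq).trans_lt hqr)
  have hgt₁ : ∀ y ∈ ball x₀ r, r ^ 2 ≤ g (y, t₁) := fun y hy => by
    have h := pow_le_pow_left₀ hr.le (hinit y hy) 2
    rw [sq_abs] at h
    simp only [hg, hf, sub_self, mul_zero, add_zero]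
    nlinarith [sq_nonneg ‖y - x₀‖]
  have hcont : ContinuousOn g (closedBall x₀ r ×ˢ Icc t₁ t) := by
    have : ContinuousOn u (closedBall x₀ r ×ˢ Icc t₁ t) :=
      hu.continuousOn.mono fun q hq => ht₁.trans hq.2.1
    simp only [hg, hf]
    fun_prop
  have hxt : (x, t) ∈ closedBall x₀ r ×ˢ Icc t₁ t :=
    ⟨ball_subset_closedBall (hmem (x, t) ht hεlt), ht, le_rfl⟩
  obtain ⟨⟨y, s⟩, ⟨-, hs⟩, hmin⟩ := ((isCompact_closedBall x₀ r).prod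
    isCompact_Icc).exists_isMinOn ⟨_, hxt⟩ hcont
  simp only at hs
  have hylt : g (y, s) < r ^ 2 := (hmin hxt).trans_lt hεlt
  have hyball : y ∈ ball x₀ r := hmem (y, s) hs.1 hylt
  have hst₁ : t₁ < s := hs.1.lt_of_ne fun h => by
    subst h
    exact (hgt₁ y hyball).not_gt hylt
  have hs0 : 0 < s := ht₁.trans_lt hst₁
  have hlocal : IsLocalMin (fun z => ‖z - x₀‖ ^ 2 + (u (z, s) - c) ^ 2) y := by
    filter_upwards [isOpen_ball.mem_nhds hyball] with z hz
    have : g (y, s) ≤ g (z, s) := hmin ⟨ball_subset_closedBall hz, hs⟩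
    simp only [hg, hf] at this
    linarith
  have hspace := (heq y s hs0).add_mul_deriv_nonneg (contDiff_slice hu hs0.le) c x₀ hlocal
  have hudiff : DifferentiableAt ℝ (fun τ => u (y, τ)) s := by
    have h1 : DifferentiableAt ℝ u (y, s) :=
      (hu.contDiffAt (continuousAt_snd.eventually (Ici_mem_nhds hs0))).differentiableAt (by simp)
    exact h1.comp s (by fun_prop)
  have hderiv : HasDerivAt (fun τ => g (y, τ))
      (2 * ((u (y, s) - c) * deriv (fun τ => u (y, τ)) s) + 2 * m + ε) s := by
    have h1 := ((hudiff.hasDerivAt.sub_const c).pow 2).const_add (‖y - x₀‖ ^ 2)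
    have h2 := ((hasDerivAt_id s).sub_const t₁).const_mul (2 * (m : ℝ))
    have h3 := ((hasDerivAt_id s).sub_const t₁).const_mul ε
    refine ((h1.add h2).add h3).congr_deriv ?_
    simp
    ring
  have htime := hderiv.nonpos_of_le_left hst₁ fun τ hτ =>
    hmin ⟨ball_subset_closedBall hyball, hτ.1, hτ.2.le.trans hs.2⟩
  linarith

/-- On a ball of radius at most `1/M` around a point where `φ ≤ -1`, the function `φ` stays
nonpositive, so that the gradient bound applies throughout. -/
lemma abs_sub_le_of_norm_gradient_le {φ : (𝔼 m) → ℝ} (hφ : Differentiable ℝ φ) {M r : ℝ}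
    (hM : 0 < M) (hrM : r ≤ 1 / M) (hgrad : ∀ x, φ x ≤ 0 → ‖∇ φ x‖ ≤ M) {x₀ : 𝔼 m}
    (hneg : φ x₀ ≤ -1) {x : 𝔼 m} (hx : x ∈ ball x₀ r) : |φ x - φ x₀| ≤ M * ‖x - x₀‖ := by
  have hfd : ∀ y, φ y ≤ 0 → ‖fderiv ℝ φ y‖ ≤ M := fun y hy => by
    rw [← toDual_gradient, LinearIsometryEquiv.norm_map]
    exact hgrad y hy
  have hnonpos : ∀ y ∈ ball x₀ r, φ y ≤ 0 := by
    intro y hy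
    set w := y - x₀
    have hw : M * ‖w‖ < 1 := by
      have h := (mem_ball_iff_norm.1 hy).trans_le hrM
      rwa [lt_div_iff₀ hM, mul_comm] at h
    have hd : ∀ τ : ℝ, HasDerivAt (fun τ : ℝ => φ (x₀ + τ • w)) (fderiv ℝ φ (x₀ + τ • w) w) τ :=
      fun τ => (hφ _).hasFDerivAt.comp_hasDerivAt τ
        (by simpa using ((hasDerivAt_id τ).smul_const w).const_add x₀)
    have h := image_le_of_deriv_right_lt_deriv_boundary (a := 0) (b := 1)
      (fun τ _ => (hd τ).continuousAt.continuousWithinAt)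
      (fun τ _ => (hd τ).hasDerivWithinAt) (B := fun τ => φ x₀ + τ) (B' := fun _ => 1)
      (by simp) (fun τ => (hasDerivAt_id τ).const_add _)
      (fun τ hτ hτB => by
        have h0 : φ (x₀ + τ • w) ≤ 0 := by
          rw [hτB]
          linarith [hτ.2]
        calc fderiv ℝ φ (x₀ + τ • w) w ≤ ‖fderiv ℝ φ (x₀ + τ • w) w‖ := le_abs_self _
          _ ≤ M * ‖w‖ := ContinuousLinearMap.le_of_opNorm_le _ (hfd _ h0) w
          _ < 1 := hw)
      (right_mem_Icc.2 zero_le_one)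
    simp only [one_smul, w, add_sub_cancel] at h
    linarith
  have hr : 0 < r := pos_of_mem_ball hx
  exact (convex_ball x₀ r).norm_image_sub_le_of_norm_fderiv_le (fun y _ => hφ y)
    (fun y hy => hfd y (hnonpos y hy)) (mem_ball_self hr) hx

/-- A continuous function without zeros on `[a, b)` keeps its sign on `[a, b]`. -/
lemma nonneg_right_of_ne_zero {ψ : ℝ → ℝ} {a b : ℝ} (hab : a ≤ b)
    (hψ : ContinuousOn ψ (Icc a b)) (ha : 0 ≤ ψ a) (hne : ∀ s ∈ Ico a b, ψ s ≠ 0) : 0 ≤ ψ b := by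
  by_contra! hb
  obtain ⟨s, hs, hs0⟩ := intermediate_value_Icc' hab hψ ⟨hb.le, ha⟩
  refine hne s ⟨hs.1, hs.2.lt_of_ne fun h => ?_⟩ hs0
  rw [← h, hs0] at hb
  exact hb.false

/-- **Two-sided barrier estimate.**  Let `u : ℝ^{n+1} × [0,∞) → ℝ` be a smooth graphical
solution to mean curvature flow, `M ≥ 1` with `|Du(x,t)| ≤ M` wherever `u(x,t) ≤ 0`.
If `u(x₀,t₁) ≤ -1` and `0 < r ≤ 1/M`, then
`u(x₀,t₁) - (M+1)r ≤ u(x₀, t₁ + r²/(2(n+1))) ≤ u(x₀,t₁) + (M+1)r`. -/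
theorem mcf_sphere_barrier_estimate (n : ℕ) (hn : 1 ≤ n)
    (u : EuclideanSpace ℝ (Fin (n + 1)) × ℝ → ℝ)
    -- u is a smooth graphical solution to mean curvature flow on ℝ^{n+1} × [0,∞)
    (hu_smooth : ContDiffOn ℝ (⊤ : ℕ∞) u {p : EuclideanSpace ℝ (Fin (n + 1)) × ℝ | 0 ≤ p.2})
    (hu_eq : ∀ (x : EuclideanSpace ℝ (Fin (n + 1))) (t : ℝ), 0 < t → mcfEqAt u x t)
    (M : ℝ) (hM : 1 ≤ M)
    -- |Du(x,t)| ≤ M at all points where u(x,t) ≤ 0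
    (hgrad : ∀ (x : EuclideanSpace ℝ (Fin (n + 1))) (t : ℝ), 0 ≤ t → u (x, t) ≤ 0 →
      ‖spatialGrad u x t‖ ≤ M)
    (x₀ : EuclideanSpace ℝ (Fin (n + 1))) (t₁ : ℝ) (ht₁ : 0 ≤ t₁)
    (hneg : u (x₀, t₁) ≤ -1)
    (r : ℝ) (hr : 0 < r) (hrM : r ≤ 1 / M) :
    u (x₀, t₁) - (M + 1) * r ≤ u (x₀, t₁ + r ^ 2 / (2 * (n + 1))) ∧
      u (x₀, t₁ + r ^ 2 / (2 * (n + 1))) ≤ u (x₀, t₁) + (M + 1) * r := by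
  have hM0 : 0 < M := by linarith
  set T := t₁ + r ^ 2 / (2 * (n + 1)) with hT
  have hTt : t₁ ≤ T := by
    rw [hT]
    linarith [show 0 ≤ r ^ 2 / (2 * ((n : ℝ) + 1)) by positivity]
  have hclose : ∀ x ∈ ball x₀ r, |u (x, t₁) - u (x₀, t₁)| ≤ M * r := fun x hx =>
    (abs_sub_le_of_norm_gradient_le (φ := fun y => u (y, t₁))
      ((contDiff_slice hu_smooth ht₁).differentiable (by norm_num)) hM0 hrM
      (fun y hy => hgrad y t₁ ht₁ hy) hneg hx).trans
      (mul_le_mul_of_nonneg_left (mem_ball_iff_norm.1 hx).le hM0.le)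
  have hcont : ContinuousOn (fun s => u (x₀, s)) (Icc t₁ T) :=
    hu_smooth.continuousOn.comp (by fun_prop) fun s hs => ht₁.trans hs.1
  have hne : ∀ c, (∀ x ∈ ball x₀ r, r ≤ |u (x, t₁) - c|) →
      ∀ s ∈ Ico t₁ T, u (x₀, s) - c ≠ 0 := by
    intro c hc s hs h0
    have h := sq_le_sqDist_graph hu_smooth hu_eq ht₁ hr c x₀ hc x₀ hs.1
    have hlt : s - t₁ < r ^ 2 / (2 * (n + 1)) := by linarith [hs.2]
    rw [lt_div_iff₀ (by positivity)] at hlt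
    simp [h0] at h
    nlinarith
  constructor
  · have h := nonneg_right_of_ne_zero (ψ := fun s => u (x₀, s) - (u (x₀, t₁) - (M + 1) * r)) hTt
      (hcont.sub continuousOn_const) (by nlinarith) (hne _ fun x hx => by
        refine le_trans ?_ (le_abs_self _)
        linarith [(abs_le.1 (hclose x hx)).1])
    linarith
  · have h := nonneg_right_of_ne_zero (ψ := fun s => (u (x₀, t₁) + (M + 1) * r) - u (x₀, s)) hTt
      (continuousOn_const.sub hcont) (by nlinarith) (fun s hs h0 => hne (u (x₀, t₁) + (M + 1) * r)
        (fun x hx => by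
          refine le_trans ?_ (neg_le_abs _)
          linarith [(abs_le.1 (hclose x hx)).2]) s hs (by linarith))
    linarith
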